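/- For all integers p ≥ 4 and n ≥ 2, f(n, p, p−1) ≤ 2^{16·p·(log₂ n)^{1 − 1/(p−2)}·log₂ log₂ n}. -/

import Mathlib

/-- `fEG n p q` is the Erdős–Gyárfás function `f(n, p, q)`: the minimum number of colors
in a `(p,q)`-coloring of the complete graph `K_n`, i.e. the least `k` for which there is
an edge-coloring of `K_n` with colors in `Fin k` such that among the edges spanned by
every set of `p` vertices at least `q` distinct colors appear. -/
noncomputable def fEG (n p q : ℕ) : ℕ :=
  sInf {k : ℕ | ∃ c : Sym2 (Fin n) → Fin k,
    ∀ S : Finset (Fin n), S.card = p →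
      q ≤ (((S ×ˢ S).filter fun e => e.1 ≠ e.2).image fun e => c s(e.1, e.2)).card}

namespace EG

open Finset

open Classical in
/-- Colors (including diagonal ones) spanned by a finite set. -/
noncomputable def colors {V C : Type} (c : V → V → C) (S : Finset V) : Finset C :=
  (S ×ˢ S).image fun p => c p.1 p.2

/-- Every subset `T` of `U` spans at least `|T|` colors (diagonal included). -/
def GoodOn {V C : Type} (c : V → V → C) (U : Finset V) : Prop :=
  ∀ T ⊆ U, T.card ≤ (colors c T).card

/-- Product coloring. -/
def tens {V C W D : Type} (c : V → V → C) (e : W → W → D) : V × W → V × W → C × D :=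
  fun x y => (c x.1 y.1, e x.2 y.2)

/-- Product with every good coloring is good. -/
def StrongOn {V C : Type} (c : V → V → C) (A : Finset V) : Prop :=
  ∀ (W D : Type) (e : W → W → D) (U : Finset W), GoodOn e U → GoodOn (tens c e) (A ×ˢ U)

theorem mem_colors {V C : Type} {c : V → V → C} {S : Finset V} {x y : V} (hx : x ∈ S)
    (hy : y ∈ S) : c x y ∈ colors c S := by
  classical
  unfold colors
  exact mem_image.2 ⟨(x, y), mem_product.2 ⟨hx, hy⟩, rfl⟩

theorem of_mem_colors {V C : Type} {c : V → V → C} {S : Finset V} {γ : C}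
    (h : γ ∈ colors c S) : ∃ x ∈ S, ∃ y ∈ S, c x y = γ := by
  classical
  unfold colors at h
  obtain ⟨⟨x, y⟩, hp, rfl⟩ := mem_image.1 h
  exact ⟨x, (mem_product.1 hp).1, y, (mem_product.1 hp).2, rfl⟩

/-- Elements of `Q` are hit from elements of `P` by a relation functional on `P`. -/
theorem card_le_of_rel {α β : Type} (P : Finset α) (Q : Finset β) (r : α → β → Prop)
    (hex : ∀ q ∈ Q, ∃ p ∈ P, r p q)
    (hun : ∀ p q q', r p q → r p q' → q = q') : Q.card ≤ P.card := by
  classical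
  rcases Q.eq_empty_or_nonempty with rfl | ⟨q0, h0⟩
  · simp
  have : Nonempty α := ⟨(hex q0 h0).choose⟩
  choose! f hf hr using hex
  refine Finset.card_le_card_of_injOn f (fun q hq => hf q hq) ?_
  intro q hq q' hq' h
  have h1 := hr q hq
  rw [h] at h1
  exact hun _ _ _ h1 (hr q' hq')

theorem StrongOn.refine {V C V' C' : Type} {c : V → V → C} {c' : V' → V' → C'}
    {A : Finset V} {A' : Finset V'} (φ : V → V') (hs : StrongOn c' A')
    (hinj : ∀ x ∈ A, ∀ y ∈ A, φ x = φ y → x = y) (hmap : ∀ x ∈ A, φ x ∈ A')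
    (hdet : ∀ x ∈ A, ∀ y ∈ A, ∀ x' ∈ A, ∀ y' ∈ A, c x y = c x' y' →
      c' (φ x) (φ y) = c' (φ x') (φ y')) : StrongOn c A := by
  classical
  intro W D e U hU T hT
  have hTA : ∀ t ∈ T, t.1 ∈ A ∧ t.2 ∈ U := fun t ht => mem_product.1 (hT ht)
  have h1 : (T.image (Prod.map φ id)).card = T.card := by
    apply card_image_of_injOn
    rintro ⟨a, b⟩ h ⟨a', b'⟩ h' heq
    simp only [Prod.map, id, Prod.mk.injEq] at heq
    exact Prod.ext (hinj _ (hTA _ h).1 _ (hTA _ h').1 heq.1) heq.2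
  rw [← h1]
  refine (hs W D e U hU (T.image (Prod.map φ id)) ?_).trans ?_
  · intro q hq
    obtain ⟨t, ht, rfl⟩ := mem_image.1 hq
    exact mem_product.2 ⟨hmap _ (hTA t ht).1, (hTA t ht).2⟩
  · refine card_le_of_rel _ _ (fun p q => ∃ x ∈ T, ∃ y ∈ T, tens c e x y = p ∧
      q = tens c' e (Prod.map φ id x) (Prod.map φ id y)) ?_ ?_
    · intro q hq
      obtain ⟨x, hx, y, hy, rfl⟩ := of_mem_colors hq
      obtain ⟨x, hx', rfl⟩ := mem_image.1 hx
      obtain ⟨y, hy', rfl⟩ := mem_image.1 hy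
      exact ⟨_, mem_colors hx' hy', x, hx', y, hy', rfl, rfl⟩
    · rintro p q q' ⟨x, hx, y, hy, h1, rfl⟩ ⟨x', hx', y', hy', h2, rfl⟩
      have h := h1.trans h2.symm
      simp only [tens, Prod.mk.injEq] at h
      have := hdet _ (hTA x hx).1 _ (hTA y hy).1 _ (hTA x' hx').1 _ (hTA y' hy').1 h.1
      simp only [tens, Prod.map, id, Prod.mk.injEq]
      exact ⟨this, h.2⟩

theorem StrongOn.tensor {V C V' C' : Type} {c : V → V → C} {c' : V' → V' → C'}
    {A : Finset V} {A' : Finset V'} (h : StrongOn c A) (h' : StrongOn c' A') :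
    StrongOn (tens c c') (A ×ˢ A') := by
  classical
  intro W D e U hU T hT
  have h2 := h _ _ _ _ (h' W D e U hU)
  let φ : (V × V') × W → V × (V' × W) := fun t => (t.1.1, (t.1.2, t.2))
  have hφ : Function.Injective φ := by
    rintro ⟨⟨a, b⟩, d⟩ ⟨⟨a', b'⟩, d'⟩ h
    simp only [φ, Prod.mk.injEq] at h
    simp [h.1, h.2.1, h.2.2]
  rw [← card_image_of_injective T hφ]
  refine (h2 (T.image φ) ?_).trans ?_
  · intro q hq
    obtain ⟨t, ht, rfl⟩ := mem_image.1 hq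
    have := hT ht
    simp only [mem_product, φ] at this ⊢
    tauto
  · refine card_le_of_rel _ _ (fun p q => q = (p.1.1, (p.1.2, p.2))) ?_ ?_
    · intro q hq
      obtain ⟨x, hx, y, hy, rfl⟩ := of_mem_colors hq
      obtain ⟨x, hx', rfl⟩ := mem_image.1 hx
      obtain ⟨y, hy', rfl⟩ := mem_image.1 hy
      exact ⟨_, mem_colors hx' hy', rfl⟩
    · rintro p q q' rfl rfl
      rfl

theorem StrongOn.good {V C : Type} {c : V → V → C} {A : Finset V} (h : StrongOn c A) :
    GoodOn c A := by
  classical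
  have h2 := h Unit Unit (fun _ _ => ()) {()} (by
    intro T hT
    rcases T.eq_empty_or_nonempty with rfl | ⟨x, hx⟩
    · simp
    · have h1 : T.card ≤ 1 := (card_le_card hT).trans (by simp)
      exact h1.trans (card_pos.2 ⟨_, mem_colors hx hx⟩))
  intro T hT
  have h3 := h2 (T ×ˢ {()}) (product_subset_product_left hT)
  rw [card_product, card_singleton, mul_one] at h3
  refine h3.trans (card_le_of_rel _ _ (fun p q => p = q.1) ?_ ?_)
  · intro q hq
    obtain ⟨x, hx, y, hy, rfl⟩ := of_mem_colors hq
    exact ⟨_, mem_colors (mem_product.1 hx).1 (mem_product.1 hy).1, rfl⟩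
  · rintro p q q' rfl h
    exact Prod.ext h rfl

theorem strong_of_card_le_one {V C : Type} {c : V → V → C} {A : Finset V} (h : A.card ≤ 1) :
    StrongOn c A := by
  classical
  intro W D e U hU T hT
  rcases T.eq_empty_or_nonempty with rfl | ⟨⟨a, b⟩, hab⟩
  · simp
  have haA := (mem_product.1 (hT hab)).1
  have hall : ∀ t ∈ T, t.1 = a := fun t ht =>
    card_le_one.1 h _ (mem_product.1 (hT ht)).1 _ haA
  have h1 : (T.image Prod.snd).card = T.card := by
    apply card_image_of_injOn
    intro x hx y hy hxy
    exact Prod.ext ((hall x hx).trans (hall y hy).symm) hxy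
  rw [← h1]
  refine (hU _ ?_).trans (card_le_of_rel _ _ (fun p q => q = p.2) ?_ ?_)
  · intro q hq
    obtain ⟨t, ht, rfl⟩ := mem_image.1 hq
    exact (mem_product.1 (hT ht)).2
  · intro q hq
    obtain ⟨x, hx, y, hy, rfl⟩ := of_mem_colors hq
    obtain ⟨x, hx', rfl⟩ := mem_image.1 hx
    obtain ⟨y, hy', rfl⟩ := mem_image.1 hy
    exact ⟨_, mem_colors hx' hy', rfl⟩
  · rintro p q q' rfl rfl
    rfl

/-- Splitting a vertex `a₀` into two vertices `a₀, a₁` joined by a private color. -/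
theorem StrongOn.split {V C C' : Type} {c : V → V → C} {c' : V → V → C'}
    {A A' : Finset V} (μ : V → V) (a₀ a₁ : V) (ha₀ : a₀ ∈ A) (ha₁ : a₁ ∈ A)
    (hs : StrongOn c' A') (hmap : ∀ x ∈ A, μ x ∈ A')
    (hμ : ∀ x ∈ A, ∀ y ∈ A, μ x = μ y → x = y ∨ (x = a₀ ∧ y = a₁) ∨ (x = a₁ ∧ y = a₀))
    (hμ01 : μ a₀ = μ a₁) (h01 : a₀ ≠ a₁)
    (hne : c a₀ a₀ ≠ c a₀ a₁)
    (hdet : ∀ x ∈ A, ∀ y ∈ A, ∀ x' ∈ A, ∀ y' ∈ A, c x y = c x' y' →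
      c' (μ x) (μ y) = c' (μ x') (μ y')) : StrongOn c A := by
  classical
  intro W D e U hU T hT
  have hTA : ∀ t ∈ T, t.1 ∈ A ∧ t.2 ∈ U := fun t ht => mem_product.1 (hT ht)
  let φ : V × W → V × W := Prod.map μ id
  let I : Finset W := U.filter fun b => (a₀, b) ∈ T ∧ (a₁, b) ∈ T
  have hI : I.card ≤ (colors e I).card := hU I (filter_subset _ _)
  have hT' : (T.image φ).card ≤ (colors (tens c' e) (T.image φ)).card := by
    apply hs W D e U hU
    intro q hq
    obtain ⟨t, ht, rfl⟩ := mem_image.1 hq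
    exact mem_product.2 ⟨hmap _ (hTA t ht).1, (hTA t ht).2⟩
  -- cardinality of T
  have hcard : T.card ≤ (T.image φ).card + I.card := by
    let J : Finset (V × W) := I.image fun b => (a₁, b)
    have hJ : J.card = I.card := card_image_of_injective _ (fun x y h => (Prod.mk.inj h).2)
    have hJT : J ⊆ T := by
      intro q hq
      obtain ⟨b, hb, rfl⟩ := mem_image.1 hq
      exact (mem_filter.1 hb).2.2
    have h1 : ((T \ J).image φ).card = (T \ J).card := by
      apply card_image_of_injOn
      rintro ⟨a, b⟩ h ⟨a', b'⟩ h' heq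
      have h := mem_sdiff.1 (mem_coe.1 h)
      have h' := mem_sdiff.1 (mem_coe.1 h')
      simp only [φ, Prod.map, id, Prod.mk.injEq] at heq
      obtain ⟨hq1, rfl⟩ := heq
      rcases hμ a (hTA _ h.1).1 a' (hTA _ h'.1).1 hq1 with h2 | ⟨rfl, rfl⟩ | ⟨rfl, rfl⟩
      · rw [h2]
      · exact absurd (mem_image.2 ⟨b, mem_filter.2 ⟨(hTA _ h.1).2, h.1, h'.1⟩, rfl⟩) h'.2
      · exact absurd (mem_image.2 ⟨b, mem_filter.2 ⟨(hTA _ h.1).2, h'.1, h.1⟩, rfl⟩) h.2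
    have h2 := card_le_card (image_subset_image (f := φ) (sdiff_subset (s := T) (t := J)))
    have h3 := card_sdiff_add_card_eq_card hJT
    omega
  -- number of colors
  let Y : Finset (C × D) := (colors e I).image fun δ => (c a₀ a₁, δ)
  have hY : Y.card = (colors e I).card :=
    card_image_of_injective _ (fun x y h => (Prod.mk.inj h).2)
  have hYc : Y ⊆ colors (tens c e) T := by
    intro q hq
    obtain ⟨δ, hδ, rfl⟩ := mem_image.1 hq
    obtain ⟨b, hb, b', hb', rfl⟩ := of_mem_colors hδ
    exact mem_colors (c := tens c e) (mem_filter.1 hb).2.1 (mem_filter.1 hb').2.2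
  have hcol : (colors (tens c' e) (T.image φ)).card ≤ (colors (tens c e) T \ Y).card := by
    refine card_le_of_rel _ _ (fun p q => ∃ x ∈ T, ∃ y ∈ T, tens c e x y = p ∧
      q = tens c' e (φ x) (φ y)) ?_ ?_
    · intro q hq
      obtain ⟨x, hx, y, hy, rfl⟩ := of_mem_colors hq
      obtain ⟨x, hx', rfl⟩ := mem_image.1 hx
      obtain ⟨y, hy', rfl⟩ := mem_image.1 hy
      by_cases hxy : tens c e x y ∈ Y
      · obtain ⟨δ, hδ, hδ'⟩ := mem_image.1 hxy
        obtain ⟨b, hb, b', hb', rfl⟩ := of_mem_colors hδ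
        have hb1 := (mem_filter.1 hb).2.1
        have hb2 := (mem_filter.1 hb').2.1
        refine ⟨tens c e (a₀, b) (a₀, b'), mem_sdiff.2 ⟨mem_colors hb1 hb2, ?_⟩,
          (a₀, b), hb1, (a₀, b'), hb2, rfl, ?_⟩
        · intro hmem
          obtain ⟨δ, _, h⟩ := mem_image.1 hmem
          exact hne (Prod.mk.inj h).1.symm
        · simp only [tens, Prod.mk.injEq] at hδ'
          have := hdet _ ha₀ _ ha₁ _ (hTA x hx').1 _ (hTA y hy').1 hδ'.1
          simp only [tens, φ, Prod.map, id, Prod.mk.injEq]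
          refine ⟨?_, hδ'.2.symm⟩
          rw [← this, hμ01]
      · exact ⟨_, mem_sdiff.2 ⟨mem_colors hx' hy', hxy⟩, x, hx', y, hy', rfl, rfl⟩
    · rintro p q q' ⟨x, hx, y, hy, h1, rfl⟩ ⟨x', hx', y', hy', h2, rfl⟩
      have h := h1.trans h2.symm
      simp only [tens, Prod.mk.injEq] at h
      have := hdet _ (hTA x hx).1 _ (hTA y hy).1 _ (hTA x' hx').1 _ (hTA y' hy').1 h.1
      simp only [tens, φ, Prod.map, id, Prod.mk.injEq]
      exact ⟨this, h.2⟩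
  have h4 := card_sdiff_add_card_eq_card hYc
  omega

open Classical in
/-- Canonical coloring: inside a fibre of `π` all edges get distinct private colors. -/
noncomputable def sub {V V₁ C₁ : Type} (π : V → V₁) (c₁ : V₁ → V₁ → C₁) :
    V → V → C₁ ⊕ Sym2 V :=
  fun x y => if π x = π y ∧ x ≠ y then Sum.inr s(x, y) else Sum.inl (c₁ (π x) (π y))

open Classical in
theorem strong_sub {V V₁ C₁ : Type} (π : V → V₁) (c₁ : V₁ → V₁ → C₁) (A₁ : Finset V₁)
    (hs : StrongOn c₁ A₁) : ∀ (n : ℕ) (A : Finset V), A.card = n → (∀ x ∈ A, π x ∈ A₁) →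
      StrongOn (sub π c₁) A := by
  intro n
  induction n with
  | zero =>
    intro A hA _
    exact strong_of_card_le_one (by omega)
  | succ n ih =>
    intro A hA hmap
    by_cases hinj : ∀ x ∈ A, ∀ y ∈ A, π x = π y → x = y
    · refine hs.refine π hinj hmap ?_
      intro x hx y hy x' hx' y' hy' h
      have h1 : ∀ x ∈ A, ∀ y ∈ A, sub π c₁ x y = Sum.inl (c₁ (π x) (π y)) := by
        intro x hx y hy
        unfold sub
        rw [if_neg]
        rintro ⟨h1, h2⟩
        exact h2 (hinj x hx y hy h1)
      rw [h1 x hx y hy, h1 x' hx' y' hy'] at h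
      exact Sum.inl.inj h
    · push Not at hinj
      obtain ⟨a₀, ha₀, a₁, ha₁, hπ, hne⟩ := hinj
      have hA' : StrongOn (sub π c₁) (A.erase a₁) := by
        apply ih
        · rw [card_erase_of_mem ha₁, hA]; rfl
        · intro x hx
          exact hmap x (mem_of_mem_erase hx)
      let μ : V → V := fun x => if x = a₁ then a₀ else x
      have hπμ : ∀ x, π (μ x) = π x := by
        intro x
        by_cases h : x = a₁ <;> simp [μ, h, hπ]
      have hμ : ∀ x y, μ x = μ y → x = y ∨ (x = a₀ ∧ y = a₁) ∨ (x = a₁ ∧ y = a₀) := by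
        intro x y h
        by_cases h1 : x = a₁ <;> by_cases h2 : y = a₁ <;> simp [μ, h1, h2] at h <;> grind
      have hμ01 : μ a₀ = μ a₁ := by simp [μ]
      refine hA'.split μ a₀ a₁ ha₀ ha₁ ?_ (fun x _ y _ => hμ x y) hμ01 hne ?_ ?_
      · intro x hx
        by_cases h : x = a₁
        · simp [μ, h, hne, ha₀]
        · simp [μ, h, hx]
      · simp [sub, hπ, hne]
      · intro x hx y hy x' hx' y' hy' h
        let g : C₁ ⊕ Sym2 V → C₁ ⊕ Sym2 V := Sum.elim Sum.inl
          (fun s => if (Sym2.map μ s).IsDiag then Sum.inl (c₁ (π a₀) (π a₀))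
            else Sum.inr (Sym2.map μ s))
        have key : ∀ x y, sub π c₁ (μ x) (μ y) = g (sub π c₁ x y) := by
          intro x y
          by_cases h1 : π x = π y
          · by_cases h2 : x = y
            · subst h2
              simp [sub, g, hπμ]
            · by_cases h3 : μ x = μ y
              · have : π x = π a₀ ∧ π y = π a₀ := by
                  rcases hμ x y h3 with h4 | ⟨rfl, rfl⟩ | ⟨rfl, rfl⟩
                  · exact absurd h4 h2
                  · exact ⟨rfl, hπ.symm⟩
                  · exact ⟨hπ.symm, rfl⟩
                simp [sub, g, hπμ, h2, h3, this.1, this.2]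
              · simp [sub, g, hπμ, h1, h2, h3]
          · simp [sub, g, hπμ, h1]
        rw [key, key, h]

open Classical in
/-- One more coordinate. -/
noncomputable def next {V₁ C₁ V C : Type} (c₁ : V₁ → V₁ → C₁) (c : V → V → C) :
    V₁ × V → V₁ × V → (C₁ × C) ⊕ Sym2 V :=
  fun x y => if x.1 = y.1 ∧ x.2 ≠ y.2 then Sum.inr s(x.2, y.2)
    else Sum.inl (c₁ x.1 y.1, c x.2 y.2)

theorem next_inr {V₁ C₁ V C : Type} {c₁ : V₁ → V₁ → C₁} {c : V → V → C} {x y : V₁ × V}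
    (h1 : x.1 = y.1) (h2 : x.2 ≠ y.2) : next c₁ c x y = Sum.inr s(x.2, y.2) := by
  unfold next; rw [if_pos ⟨h1, h2⟩]

theorem next_inl {V₁ C₁ V C : Type} {c₁ : V₁ → V₁ → C₁} {c : V → V → C} {x y : V₁ × V}
    (h : ¬ (x.1 = y.1 ∧ x.2 ≠ y.2)) : next c₁ c x y = Sum.inl (c₁ x.1 y.1, c x.2 y.2) := by
  unfold next; rw [if_neg h]

open Classical in
theorem strong_next_of_pairs {V₁ C₁ V C : Type} {c₁ : V₁ → V₁ → C₁} {c : V → V → C}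
    {A : Finset (V₁ × V)} (hs : StrongOn c₁ (A.image Prod.fst))
    (hp : ∀ x ∈ A, ∀ y ∈ A, ∀ x' ∈ A, ∀ y' ∈ A, x.1 = y.1 → x'.1 = y'.1 → x.2 ≠ y.2 →
      x'.2 ≠ y'.2 → s(x.2, y.2) = s(x'.2, y'.2) → s(x, y) = s(x', y')) :
    StrongOn (next c₁ c) A := by
  have h := strong_sub Prod.fst c₁ _ hs A.card A rfl (fun x hx => mem_image_of_mem _ hx)
  refine h.refine id (fun x _ y _ h => h) (fun x hx => hx) ?_
  intro x hx y hy x' hx' y' hy' hc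
  have hsub : ∀ x y : V₁ × V, (x.1 = y.1 ∧ x ≠ y) ↔ (x.1 = y.1 ∧ x.2 ≠ y.2) := by
    intro x y
    constructor
    · rintro ⟨h1, h2⟩
      exact ⟨h1, fun h3 => h2 (Prod.ext h1 h3)⟩
    · rintro ⟨h1, h2⟩
      exact ⟨h1, fun h3 => h2 (by rw [h3])⟩
  simp only [id, sub, hsub]
  by_cases h1 : x.1 = y.1 ∧ x.2 ≠ y.2 <;> by_cases h2 : x'.1 = y'.1 ∧ x'.2 ≠ y'.2
  · rw [next_inr h1.1 h1.2, next_inr h2.1 h2.2] at hc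
    rw [if_pos h1, if_pos h2, hp x hx y hy x' hx' y' hy' h1.1 h2.1 h1.2 h2.2 (Sum.inr.inj hc)]
  · rw [next_inr h1.1 h1.2, next_inl h2] at hc
    cases hc
  · rw [next_inl h1, next_inr h2.1 h2.2] at hc
    cases hc
  · rw [next_inl h1, next_inl h2] at hc
    rw [if_neg h1, if_neg h2, (Prod.mk.inj (Sum.inl.inj hc)).1]

/-- Symmetric coloring, whose color `z` marks the diagonal. -/
structure IsCol {V C : Type} (c : V → V → C) (z : C) : Prop where
  symm : ∀ x y, c x y = c y x
  diag : ∀ x y, c x y = z ↔ x = y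

theorem isCol_next {V₁ C₁ V C : Type} {c₁ : V₁ → V₁ → C₁} {c : V → V → C} {z₁ : C₁} {z : C}
    (h₁ : IsCol c₁ z₁) (hsymm : ∀ x y, c x y = c y x) (hz : ∀ x, c x x = z) :
    IsCol (next c₁ c) (Sum.inl (z₁, z)) := by
  constructor
  · intro x y
    by_cases h : x.1 = y.1 ∧ x.2 ≠ y.2
    · rw [next_inr h.1 h.2, next_inr h.1.symm h.2.symm, Sym2.eq_swap]
    · rw [next_inl h, next_inl (fun h' => h ⟨h'.1.symm, h'.2.symm⟩), h₁.symm, hsymm]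
  · intro x y
    constructor
    · intro hc
      by_cases h : x.1 = y.1 ∧ x.2 ≠ y.2
      · rw [next_inr h.1 h.2] at hc
        cases hc
      · rw [next_inl h] at hc
        have h1 := (h₁.diag _ _).1 (Prod.mk.inj (Sum.inl.inj hc)).1
        by_contra hne
        exact h ⟨h1, fun h2 => hne (Prod.ext h1 h2)⟩
    · rintro rfl
      rw [next_inl (fun h => h.2 rfl), hz, (h₁.diag _ _).2 rfl]

open Classical in
theorem strong_next {V₁ C₁ V C : Type} {c₁ : V₁ → V₁ → C₁} {c : V → V → C} {z₁ : C₁} {k : ℕ}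
    (h₁ : IsCol c₁ z₁) (hsymm : ∀ x y, c x y = c y x)
    (hs₁ : ∀ A : Finset V₁, A.card ≤ k + 1 → StrongOn c₁ A)
    (hs : ∀ A : Finset V, A.card ≤ k → StrongOn c A)
    (A : Finset (V₁ × V)) (hA : A.card ≤ k + 1) : StrongOn (next c₁ c) A := by
  have h1 : StrongOn c₁ (A.image Prod.fst) := hs₁ _ (card_image_le.trans hA)
  by_cases hk : (A.image Prod.snd).card ≤ k
  · have h2 := h1.tensor (hs _ hk)
    refine h2.refine id (fun x _ y _ h => h)
      (fun x hx => mem_product.2 ⟨mem_image_of_mem _ hx, mem_image_of_mem _ hx⟩) ?_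
    intro x hx y hy x' hx' y' hy' hc
    simp only [id, tens]
    by_cases h1 : x.1 = y.1 ∧ x.2 ≠ y.2 <;> by_cases h2 : x'.1 = y'.1 ∧ x'.2 ≠ y'.2
    · rw [next_inr h1.1 h1.2, next_inr h2.1 h2.2] at hc
      rw [(h₁.diag _ _).2 h1.1, (h₁.diag _ _).2 h2.1]
      rcases Sym2.eq_iff.1 (Sum.inr.inj hc) with ⟨h3, h4⟩ | ⟨h3, h4⟩
      · rw [h3, h4]
      · rw [h3, h4, hsymm]
    · rw [next_inr h1.1 h1.2, next_inl h2] at hc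
      cases hc
    · rw [next_inl h1, next_inr h2.1 h2.2] at hc
      cases hc
    · rw [next_inl h1, next_inl h2] at hc
      exact Sum.inl.inj hc
  · have hcard : (A.image Prod.snd).card = A.card := le_antisymm card_image_le (by omega)
    have hinj := card_image_iff.1 hcard
    refine strong_next_of_pairs h1 ?_
    intro x hx y hy x' hx' y' hy' _ _ _ _ h
    rcases Sym2.eq_iff.1 h with ⟨h3, h4⟩ | ⟨h3, h4⟩
    · rw [hinj hx hx' h3, hinj hy hy' h4]
    · rw [hinj hx hy' h3, hinj hy hx' h4, Sym2.eq_swap]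

open Classical in
theorem strong_next_bool {V₁ C₁ : Type} {c₁ : V₁ → V₁ → C₁}
    (hs₁ : ∀ A : Finset V₁, A.card ≤ 3 → StrongOn c₁ A)
    (A : Finset (V₁ × Bool)) (hA : A.card ≤ 3) :
    StrongOn (next c₁ (fun _ _ : Bool => ())) A := by
  refine strong_next_of_pairs (hs₁ _ (card_image_le.trans hA)) ?_
  rintro ⟨a, b⟩ hx ⟨a2, b2⟩ hy ⟨a3, b3⟩ hx' ⟨a4, b4⟩ hy' h1 h2 h3 h4 h5
  simp only at h1 h2 h3 h4 h5
  subst h1 h2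
  by_cases h : a = a3
  · subst h
    rcases Sym2.eq_iff.1 h5 with ⟨rfl, rfl⟩ | ⟨rfl, rfl⟩
    · rfl
    · exact Sym2.eq_swap
  · exfalso
    have hsub : ({(a, b), (a, b2), (a3, b3), (a3, b4)} : Finset (V₁ × Bool)) ⊆ A := by
      intro t ht
      simp only [mem_insert, mem_singleton] at ht
      rcases ht with rfl | rfl | rfl | rfl <;> assumption
    have h6 := card_le_card hsub
    rw [card_insert_of_notMem, card_insert_of_notMem, card_insert_of_notMem,
      card_singleton] at h6
    · omega
    · simp [h4]
    · simp [h]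
    · simp [h, h3]

/-- Iterating `next`. -/
theorem chain {V C : Type} [Finite V] [Finite C] (c : V → V → C) (z : C) (k : ℕ)
    (hsymm : ∀ x y, c x y = c y x) (hz : ∀ x, c x x = z)
    (hstep : ∀ (V₁ C₁ : Type) (c₁ : V₁ → V₁ → C₁) (z₁ : C₁), IsCol c₁ z₁ →
      (∀ A : Finset V₁, A.card ≤ k → StrongOn c₁ A) →
      ∀ A : Finset (V₁ × V), A.card ≤ k → StrongOn (next c₁ c) A) (m : ℕ) :
    ∃ (V' C' : Type) (_ : Finite V') (_ : Finite C') (c' : V' → V' → C') (z' : C'),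
      IsCol c' z' ∧ Nat.card V' = Nat.card V ^ m ∧
      Nat.card C' ≤ Nat.card C ^ m * (1 + m * Nat.card V ^ 2) ∧
      ∀ A : Finset V', A.card ≤ k → StrongOn c' A := by
  induction m with
  | zero =>
    refine ⟨Unit, Unit, inferInstance, inferInstance, fun _ _ => (), (), ⟨?_, ?_⟩, ?_, ?_, ?_⟩
    · simp
    · simp
    · simp
    · simp
    · intro A _
      exact strong_of_card_le_one ((card_le_univ A).trans (by simp))
  | succ m ih =>
    obtain ⟨V', C', hV, hC, c', z', hcol, hcV, hcC, hst⟩ := ih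
    have hSym : Finite (Sym2 V) := Quot.finite _
    refine ⟨V' × V, (C' × C) ⊕ Sym2 V, inferInstance, inferInstance, next c' c, _,
      isCol_next hcol hsymm hz, ?_, ?_, hstep _ _ c' z' hcol hst⟩
    · rw [Nat.card_prod, hcV, pow_succ]
    · have hC1 : 1 ≤ Nat.card C := by
        have : Nonempty C := ⟨z⟩
        exact Nat.card_pos
      have hS : Nat.card (Sym2 V) ≤ Nat.card V ^ 2 := by
        rw [sq, ← Nat.card_prod]
        exact Nat.card_le_card_of_surjective (Quot.mk _) Quot.mk_surjective
      rw [Nat.card_sum, Nat.card_prod]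
      have h2 : 1 ≤ Nat.card C ^ (m + 1) := Nat.one_le_pow _ _ hC1
      calc Nat.card C' * Nat.card C + Nat.card (Sym2 V)
          ≤ Nat.card C ^ m * (1 + m * Nat.card V ^ 2) * Nat.card C
            + Nat.card C ^ (m + 1) * Nat.card V ^ 2 := by
              gcongr
              exact hS.trans (Nat.le_mul_of_pos_left _ h2)
        _ = Nat.card C ^ (m + 1) * (1 + (m + 1) * Nat.card V ^ 2) := by ring

theorem exists_col (b l : ℕ) (hb : 1 ≤ b) (hl : b ≤ 2 ^ l) (d : ℕ) :
    ∃ (V C : Type) (_ : Finite V) (_ : Finite C) (c : V → V → C) (z : C),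
      IsCol c z ∧ Nat.card V = 2 ^ (b ^ (d + 1)) ∧
      Nat.card C ≤ 2 ^ ((d + 1) * b ^ d * (l + 3)) ∧
      ∀ A : Finset V, A.card ≤ d + 3 → StrongOn c A := by
  induction d with
  | zero =>
    obtain ⟨V, C, hV, hC, c, z, h1, h2, h3, h4⟩ :=
      chain (fun _ _ : Bool => ()) () 3 (by simp) (by simp)
        (fun V₁ C₁ c₁ z₁ _ hs A hA => strong_next_bool hs A hA) b
    refine ⟨V, C, hV, hC, c, z, h1, ?_, ?_, h4⟩
    · simpa using h2
    · refine h3.trans ?_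
      simp only [Nat.card_eq_fintype_card, Fintype.card_unit, Fintype.card_bool, one_pow, one_mul,
        zero_add, pow_zero, mul_one]
      rw [pow_add]
      omega
  | succ d ih =>
    obtain ⟨V, C, hV, hC, c, z, h1, h2, h3, h4⟩ := ih
    obtain ⟨V', C', hV', hC', c', z', h1', h2', h3', h4'⟩ :=
      chain c z (d + 4) h1.symm (fun x => (h1.diag x x).2 rfl)
        (fun V₁ C₁ c₁ z₁ hc₁ hs A hA => strong_next hc₁ h1.symm hs h4 A hA) b
    refine ⟨V', C', hV', hC', c', z', h1', ?_, ?_, h4'⟩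
    · rw [h2', h2, ← pow_mul, pow_succ b (d + 1)]
    · refine h3'.trans ?_
      rw [h2, ← pow_mul]
      set B := b ^ (d + 1) with hB
      have hB1 : 1 ≤ B := Nat.one_le_pow _ _ hb
      have h5 : 1 + b * 2 ^ (B * 2) ≤ 2 ^ (1 + l + B * 2) := by
        have h6 : 1 ≤ b * 2 ^ (B * 2) := Nat.mul_pos hb (by positivity)
        calc 1 + b * 2 ^ (B * 2) ≤ 2 * (b * 2 ^ (B * 2)) := by omega
          _ ≤ 2 * (2 ^ l * 2 ^ (B * 2)) := by gcongr
          _ = _ := by rw [pow_add, pow_add]; ring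
      calc Nat.card C ^ b * (1 + b * 2 ^ (B * 2))
          ≤ (2 ^ ((d + 1) * b ^ d * (l + 3))) ^ b * 2 ^ (1 + l + B * 2) := by gcongr
        _ = 2 ^ ((d + 1) * B * (l + 3) + (1 + l + B * 2)) := by
            rw [← pow_mul, ← pow_add, hB]; congr 1; ring
        _ ≤ 2 ^ ((d + 1 + 1) * B * (l + 3)) := by
            apply Nat.pow_le_pow_right (by norm_num)
            nlinarith [Nat.mul_le_mul_right (l + 1) hB1]

/-- The bound on `fEG` obtained from a finite coloring. -/
theorem fEG_le_of_col {V C : Type} [Finite V] [Finite C] (c : V → V → C) (z : C) (p n : ℕ)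
    (hc : IsCol c z) (hn : n ≤ Nat.card V)
    (hs : ∀ A : Finset V, A.card ≤ p → StrongOn c A) : fEG n p (p - 1) ≤ Nat.card C := by
  classical
  obtain ⟨f⟩ : Nonempty (Fin n ↪ V) := by
    have := Fintype.ofFinite V
    apply Function.Embedding.nonempty_of_card_le
    simpa using hn
  let g : C ≃ Fin (Nat.card C) := Finite.equivFin C
  apply Nat.sInf_le
  refine ⟨Sym2.lift ⟨fun x y => g (c (f x) (f y)), fun x y => by simp only [hc.symm (f x) (f y)]⟩, ?_⟩
  intro S hS
  have h1 := (hs (S.map f) (by rw [card_map, hS])).good _ (Subset.refl _)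
  rw [card_map, hS] at h1
  simp only [Sym2.lift_mk]
  have h2 : (colors c (S.map f)).card ≤ ((((S ×ˢ S).filter fun e => e.1 ≠ e.2).image
      fun e => g (c (f e.1) (f e.2))).map g.symm.toEmbedding ∪ {z}).card := by
    apply card_le_card
    intro γ hγ
    obtain ⟨x, hx, y, hy, rfl⟩ := of_mem_colors hγ
    obtain ⟨x, hx', rfl⟩ := mem_map.1 hx
    obtain ⟨y, hy', rfl⟩ := mem_map.1 hy
    by_cases hxy : x = y
    · subst hxy
      simp [(hc.diag _ _).2 rfl]
    · apply mem_union_left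
      apply mem_map.2
      refine ⟨g (c (f x) (f y)), mem_image.2 ⟨(x, y), ?_, rfl⟩, by simp⟩
      simp [hx', hy', hxy]
  have h3 := (h1.trans h2).trans (card_union_le _ _)
  rw [card_map, card_singleton] at h3
  omega

/-- The trivial bound, from the rainbow coloring. -/
theorem fEG_le_sq (p n : ℕ) (hn : 1 ≤ n) (hp : 3 ≤ p) : fEG n p (p - 1) ≤ n ^ 2 := by
  classical
  have hS : Nat.card (Sym2 (Fin n)) ≤ n ^ 2 := by
    have : Nat.card (Fin n × Fin n) = n ^ 2 := by simp [sq]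
    rw [← this]
    exact Nat.card_le_card_of_surjective (Quot.mk _) Quot.mk_surjective
  refine le_trans ?_ hS
  have hfin : Finite (Sym2 (Fin n)) := inferInstance
  let g : Sym2 (Fin n) ≃ Fin (Nat.card (Sym2 (Fin n))) := Finite.equivFin _
  apply Nat.sInf_le
  refine ⟨g, ?_⟩
  intro S hS
  obtain ⟨x, hx⟩ : S.Nonempty := card_pos.1 (by omega)
  have h1 : ((S.erase x).image fun y => g s(x, y)).card = p - 1 := by
    rw [card_image_of_injective, card_erase_of_mem hx, hS]
    intro y y' h
    have := g.injective h
    rcases Sym2.eq_iff.1 this with h | h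
    · exact h.2
    · rw [h.2, h.1]
  rw [← h1]
  apply card_le_card
  intro q hq
  obtain ⟨y, hy, rfl⟩ := mem_image.1 hq
  refine mem_image.2 ⟨(x, y), ?_, rfl⟩
  have := mem_erase.1 hy
  simp [hx, this.2, this.1.symm]

theorem fEG_two (p : ℕ) (hp : 4 ≤ p) : fEG 2 p (p - 1) ≤ 1 := by
  apply Nat.sInf_le
  refine ⟨fun _ => 0, fun S hS => ?_⟩
  have := card_le_univ S
  simp at this
  omega

end EG

namespace EG

theorem main_case (d n : ℕ) (b : ℝ) (hn : 1 ≤ n) (hbL : Real.logb 2 n = b ^ (d + 1))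
    (hb16 : 16 ≤ b) (hbd : (d : ℝ) ≤ b) :
    (fEG n (d + 3) (d + 3 - 1) : ℝ) ≤
      (2 : ℝ) ^ (16 * ((d : ℝ) + 3) * b ^ d * (((d : ℝ) + 1) * Real.logb 2 b)) := by
  set β := ⌈b⌉₊ with hβ
  have h1 : b ≤ β := Nat.le_ceil b
  have h2 : (β : ℝ) < b + 1 := Nat.ceil_lt_add_one (by linarith)
  have hβ1 : 1 ≤ β := by
    have : (1 : ℝ) ≤ β := by linarith
    exact_mod_cast this
  have hβpos : (0 : ℝ) < β := by linarith
  set l := ⌈Real.logb 2 β⌉₊ with hl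
  have hlog4 : 4 ≤ Real.logb 2 b := by
    rw [Real.le_logb_iff_rpow_le (by norm_num) (by linarith)]
    norm_num
    exact hb16
  have hlogβ : Real.logb 2 β ≤ 1 + Real.logb 2 b := by
    have : Real.logb 2 (2 * b) = 1 + Real.logb 2 b := by
      rw [Real.logb_mul (by norm_num) (by linarith)]
      simp
    rw [← this]
    exact Real.logb_le_logb_of_le (by norm_num) hβpos (by linarith)
  have hlogβ0 : 0 ≤ Real.logb 2 β := Real.logb_nonneg (by norm_num) (by linarith)
  have hl2 : (l : ℝ) < Real.logb 2 β + 1 := Nat.ceil_lt_add_one hlogβ0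
  have hl1 : β ≤ 2 ^ l := by
    have : (β : ℝ) ≤ (2 : ℝ) ^ (l : ℝ) := by
      rw [← Real.logb_le_iff_le_rpow (by norm_num) hβpos]
      exact Nat.le_ceil _
    rw [Real.rpow_natCast] at this
    exact_mod_cast this
  obtain ⟨V, C, hfV, hfC, c, z, hc, hV, hC, hs⟩ := exists_col β l hβ1 hl1 d
  have hnV : n ≤ Nat.card V := by
    rw [hV]
    have : (n : ℝ) ≤ (2 : ℝ) ^ (((β ^ (d + 1) : ℕ)) : ℝ) := by
      rw [← Real.logb_le_iff_le_rpow (by norm_num) (by exact_mod_cast hn), hbL]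
      push_cast
      exact pow_le_pow_left₀ (by linarith) h1 _
    rw [Real.rpow_natCast] at this
    exact_mod_cast this
  have hf := (fEG_le_of_col c z (d + 3) n hc hnV hs).trans hC
  have hf' : (fEG n (d + 3) (d + 3 - 1) : ℝ) ≤
      (2 : ℝ) ^ ((((d + 1) * β ^ d * (l + 3) : ℕ)) : ℝ) := by
    rw [Real.rpow_natCast]
    exact_mod_cast hf
  refine hf'.trans (Real.rpow_le_rpow_of_exponent_le (by norm_num) ?_)
  push_cast
  have hbpos : 0 < b := by linarith
  have hpow : (β : ℝ) ^ d ≤ 3 * b ^ d := by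
    have e1 : (β : ℝ) ≤ b * (1 + 1 / b) := by
      have : b * (1 + 1 / b) = b + 1 := by field_simp
      linarith
    have e2 : (1 + 1 / b) ^ d ≤ 3 := by
      have a1 : 1 + 1 / b ≤ Real.exp (1 / b) := by
        have := Real.add_one_le_exp (1 / b)
        linarith
      calc (1 + 1 / b) ^ d ≤ Real.exp (1 / b) ^ d := pow_le_pow_left₀ (by positivity) a1 _
        _ = Real.exp (d * (1 / b)) := (Real.exp_nat_mul _ _).symm
        _ ≤ Real.exp 1 := by
          apply Real.exp_le_exp.2
          rw [mul_one_div, div_le_one hbpos]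
          exact hbd
        _ ≤ 3 := by
          have := Real.exp_one_lt_d9
          linarith
    calc (β : ℝ) ^ d ≤ (b * (1 + 1 / b)) ^ d := pow_le_pow_left₀ hβpos.le e1 _
      _ = (1 + 1 / b) ^ d * b ^ d := by rw [mul_pow, mul_comm]
      _ ≤ 3 * b ^ d := mul_le_mul_of_nonneg_right e2 (by positivity)
  have hl3 : (l : ℝ) + 3 ≤ 3 * Real.logb 2 b := by linarith
  have hd0 : (0 : ℝ) ≤ d := Nat.cast_nonneg d
  calc ((d : ℝ) + 1) * (β : ℝ) ^ d * ((l : ℝ) + 3)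
      ≤ ((d : ℝ) + 1) * (3 * b ^ d) * (3 * Real.logb 2 b) := by gcongr
    _ = 9 * (b ^ d * (((d : ℝ) + 1) * Real.logb 2 b)) := by ring
    _ ≤ (16 * ((d : ℝ) + 3)) * (b ^ d * (((d : ℝ) + 1) * Real.logb 2 b)) := by
      apply mul_le_mul_of_nonneg_right
      · linarith
      · have : 0 ≤ Real.logb 2 b := by linarith
        positivity
    _ = _ := by ring

theorem final (d n : ℕ) (hd : 1 ≤ d) (hn : 2 ≤ n) :
    (fEG n (d + 3) (d + 3 - 1) : ℝ) ≤
      (2 : ℝ) ^ (16 * ((d : ℝ) + 3) * Real.logb 2 n ^ (1 - 1 / ((d : ℝ) + 1)) *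
        Real.logb 2 (Real.logb 2 n)) := by
  rcases hn.eq_or_lt with rfl | hn3
  · have : (fEG 2 (d + 3) (d + 3 - 1) : ℝ) ≤ 1 := by exact_mod_cast fEG_two (d + 3) (by omega)
    simpa using this
  have hd1 : (1 : ℝ) ≤ d := by exact_mod_cast hd
  have hn3' : (3 : ℝ) ≤ n := by exact_mod_cast hn3
  set Λ := Real.logb 2 n with hΛ
  have hL : (3 / 2 : ℝ) ≤ Λ := by
    rw [hΛ, Real.le_logb_iff_rpow_le (by norm_num) (by linarith)]
    refine le_trans ?_ hn3'
    have : ((2 : ℝ) ^ (3 / 2 : ℝ)) ^ 2 = 8 := by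
      rw [← Real.rpow_natCast, ← Real.rpow_mul (by norm_num)]
      norm_num
    nlinarith [Real.rpow_pos_of_pos (show (0 : ℝ) < 2 by norm_num) (3 / 2 : ℝ)]
  have hLpos : 0 < Λ := by linarith
  have hLL : (1 / 2 : ℝ) ≤ Real.logb 2 Λ := by
    rw [Real.le_logb_iff_rpow_le (by norm_num) hLpos]
    refine le_trans ?_ hL
    have : ((2 : ℝ) ^ (1 / 2 : ℝ)) ^ 2 = 2 := by
      rw [← Real.rpow_natCast, ← Real.rpow_mul (by norm_num)]
      norm_num
    nlinarith [Real.rpow_pos_of_pos (show (0 : ℝ) < 2 by norm_num) (1 / 2 : ℝ)]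
  set b := Λ ^ (1 / ((d : ℝ) + 1)) with hb
  have hbpos : 0 < b := Real.rpow_pos_of_pos hLpos _
  have hbL : Λ = b ^ (d + 1) := by
    rw [hb, ← Real.rpow_natCast, ← Real.rpow_mul hLpos.le]
    push_cast
    rw [one_div_mul_cancel (by positivity), Real.rpow_one]
  have hbd : Λ ^ (1 - 1 / ((d : ℝ) + 1)) = b ^ d := by
    rw [Real.rpow_sub hLpos, Real.rpow_one, ← hb, hbL, pow_succ]
    field_simp
  have hbl : Real.logb 2 Λ = ((d : ℝ) + 1) * Real.logb 2 b := by
    rw [hbL, Real.logb_pow]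
    push_cast
    ring
  rw [hbd]
  by_cases hE : 2 * Λ ≤ 16 * ((d : ℝ) + 3) * b ^ d * Real.logb 2 Λ
  · refine le_trans ?_ (Real.rpow_le_rpow_of_exponent_le (by norm_num) hE)
    have h0 : (fEG n (d + 3) (d + 3 - 1) : ℝ) ≤ (n : ℝ) ^ 2 := by
      exact_mod_cast fEG_le_sq (d + 3) n (by omega) (by omega)
    have h1 : (2 : ℝ) ^ (2 * Λ) = (n : ℝ) ^ 2 := by
      rw [mul_comm, Real.rpow_mul (by norm_num), hΛ,
        Real.rpow_logb (by norm_num) (by norm_num) (by linarith)]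
      norm_num
    rw [h1]
    exact h0
  · have hE' : 8 * ((d : ℝ) + 3) * Real.logb 2 Λ < b := by
      have hlt := not_le.1 hE
      have hbL2 : Λ = b ^ d * b := by rw [hbL, pow_succ]
      have hp : 0 < b ^ d := by positivity
      by_contra hcon
      have := mul_le_mul_of_nonneg_left (not_lt.1 hcon) hp.le
      nlinarith
    have hb4 : 4 * ((d : ℝ) + 3) < b := by nlinarith
    have := main_case d n b (by omega) hbL (by linarith) (by linarith)
    rw [hbl]
    exact this

end EG

/-- **Theorem (Conlon–Fox–Lee–Sudakov).** For all integers `p ≥ 4` and `n ≥ 2`,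
`f(n, p, p−1) ≤ 2 ^ (16 p (log₂ n)^{1 − 1/(p−2)} log₂ log₂ n)`. -/
theorem stmt0 (p n : ℕ) (hp : 4 ≤ p) (hn : 2 ≤ n) :
    (fEG n p (p - 1) : ℝ) ≤
      (2 : ℝ) ^ (16 * (p : ℝ) * Real.logb 2 n ^ (1 - 1 / ((p : ℝ) - 2)) *
        Real.logb 2 (Real.logb 2 n)) := by
  obtain ⟨d, rfl⟩ : ∃ d, p = d + 3 := ⟨p - 3, by omega⟩
  have h := EG.final d n (by omega) hn
  have e1 : ((d + 3 : ℕ) : ℝ) = (d : ℝ) + 3 := by push_cast; rfl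
  have e2 : (d : ℝ) + 3 - 2 = (d : ℝ) + 1 := by ring
  rw [e1, e2]
  exact h
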